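/- arXiv:1012.1790 — 5 statements merged into one kernel-verified Lean document; each statement's English description precedes it below -/
import Mathlib

section
/- (Condensation Lemma / Desnanot–Jacobi identity.) Let A be an n×n matrix (n ≥ 3) with entries a_{ij} over a commutative ring. Let b_{11} be the determinant of the (n−1)×(n−1) submatrix of A obtained by deleting the last row and last column, b_{12} the determinant of the submatrix obtained by deleting the last row and first column, b_{21} the determinant of the submatrix obtained by deleting the first row and last column, and b_{22} the determinant of the submatrix obtained by deleting the first row and first column. Let C be the determinant of the central (n−2)×(n−2) submatrix of A obtained by deleting both the first and last rows and both the first and last columns. Then b_{11}b_{22} − b_{12}b_{21} = (det A) · C. -/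
open Matrix in
/-- The identity multiplied by the determinant. -/
theorem condensation_aux {R : Type*} [CommRing R] (n : ℕ)
    (A : Matrix (Fin (n + 3)) (Fin (n + 3)) R) :
    A.det * ((A.submatrix Fin.castSucc Fin.castSucc).det * (A.submatrix Fin.succ Fin.succ).det
      - (A.submatrix Fin.castSucc Fin.succ).det * (A.submatrix Fin.succ Fin.castSucc).det)
    = A.det * (A.det *
      (A.submatrix (fun i : Fin (n + 1) => i.succ.castSucc)
        (fun j : Fin (n + 1) => j.succ.castSucc)).det) := by
  let L : Fin (n + 3) := Fin.last _
  let P : Matrix (Fin (n + 3)) (Fin 2) R := of fun i k => if k = 0 then (1 : Matrix (Fin (n + 3)) (Fin (n + 3)) R) i 0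
    else (1 : Matrix (Fin (n + 3)) (Fin (n + 3)) R) i L
  let U : Matrix (Fin (n + 3)) (Fin 2) R := A.adjugate * P - P
  have hL : L ≠ 0 := (Fin.last_pos).ne'
  have hM : (1 + U * Pᵀ).det = A.adjugate 0 0 * A.adjugate L L
      - A.adjugate 0 L * A.adjugate L 0 := by
    rw [det_one_add_mul_comm, det_fin_two]
    have h : ∀ k l, (Pᵀ * U) k l = U (if k = 0 then 0 else L) l := by
      intro k l
      fin_cases k <;> simp [P, Matrix.mul_apply, Matrix.one_apply]
    have h2 : ∀ k l, (A.adjugate * P) k l = A.adjugate k (if l = 0 then 0 else L) := by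
      intro k l
      fin_cases l <;> simp [P, Matrix.mul_apply, Matrix.one_apply]
    simp only [Matrix.add_apply, h, U, Matrix.sub_apply, h2]
    simp [P, Matrix.one_apply, hL, hL.symm]
  have hB : A * (1 + U * Pᵀ) = (A.updateCol 0 (Pi.single 0 A.det)).updateCol L
      (Pi.single L A.det) := by
    have : A * (1 + U * Pᵀ) = A + (A.det • P - A * P) * Pᵀ := by
      simp only [U, Matrix.mul_add, Matrix.mul_one, ← Matrix.mul_assoc, Matrix.mul_sub,
        mul_adjugate, Matrix.smul_mul, Matrix.one_mul]
    rw [this]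
    have h2 : ∀ k l, (A * P) k l = A k (if l = 0 then 0 else L) := by
      intro k l
      fin_cases l <;> simp [P, Matrix.mul_apply, Matrix.one_apply]
    ext i j
    rw [Matrix.add_apply, Matrix.mul_apply, Fin.sum_univ_two]
    simp only [Matrix.sub_apply, h2, Matrix.updateCol_apply, Pi.single_apply]
    by_cases hj : j = L
    · subst hj
      simp [P, Matrix.one_apply, hL]
    · by_cases hj0 : j = 0
      · subst hj0
        simp [P, Matrix.one_apply, hL.symm]
      · simp [P, Matrix.one_apply, hj, hj0]
  have hdet := congrArg det hB
  rw [det_mul, hM] at hdet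
  have hR : ∀ d : R, ((A.updateCol 0 (Pi.single 0 d)).updateCol L (Pi.single L d)).det
      = d * (d * (A.submatrix (fun i : Fin (n + 1) => i.succ.castSucc)
        (fun j : Fin (n + 1) => j.succ.castSucc)).det)   := by
    intro d
    rw [det_succ_column _ L, Finset.sum_eq_single L]
    · have e : (((A.updateCol 0 (Pi.single 0 d)).updateCol L
          (Pi.single L d)).submatrix L.succAbove L.succAbove)
          = (A.submatrix Fin.castSucc Fin.castSucc).updateCol 0 (Pi.single 0 d) := by
        ext i j
        simp [L, Matrix.updateCol_apply, Pi.single_apply, Fin.castSucc_ne_last]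
      rw [e, det_succ_column_zero, Finset.sum_eq_single 0]
      · have e2 : (((A.submatrix Fin.castSucc Fin.castSucc).updateCol 0
          (Pi.single 0 d)).submatrix (Fin.succAbove 0) Fin.succ)
          = (A.submatrix (fun i : Fin (n + 1) => i.succ.castSucc)
            (fun j : Fin (n + 1) => j.succ.castSucc)) := by
          ext i j
          simp [Matrix.updateCol_apply]
        rw [e2]
        simp [← two_mul]
      · intro b _ hb
        simp [hb]
      · simp
    · intro b _ hb
      simp [hb]
    · simp
  rw [hR] at hdet
  rw [← hdet]
  simp only [adjugate_fin_succ_eq_det_submatrix, L]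
  have hs : ((-1 : R) ^ (n + 2)) * (-1) ^ (n + 2) = 1 := by
    rw [← mul_pow]; simp
  simp only [Fin.succAbove_last, Fin.succAbove_zero, Fin.val_last, Fin.val_zero, Fin.coe_ofNat_eq_mod, Nat.zero_mod, add_zero, zero_add,
    pow_zero, one_mul, pow_add (-1 : R) (n + 2) (n + 2), hs]
  linear_combination (A.det * (A.submatrix Fin.castSucc Fin.succ).det *
    (A.submatrix Fin.succ Fin.castSucc).det) * hs

/-- Desnanot–Jacobi (condensation) identity: for an `(n+3) × (n+3)` matrix `A`
(i.e. any square matrix of size at least 3) over a commutative ring,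
`b₁₁ b₂₂ − b₁₂ b₂₁ = det A · C`, where the `bᵢⱼ` are the corner minors of order `n+2`
and `C` is the central minor of order `n+1`. -/
theorem stmt_2 {R : Type*} [CommRing R] (n : ℕ)
    (A : Matrix (Fin (n + 3)) (Fin (n + 3)) R) :
    (A.submatrix Fin.castSucc Fin.castSucc).det * (A.submatrix Fin.succ Fin.succ).det
      - (A.submatrix Fin.castSucc Fin.succ).det * (A.submatrix Fin.succ Fin.castSucc).det
    = A.det *
      (A.submatrix (fun i : Fin (n + 1) => i.succ.castSucc)
        (fun j : Fin (n + 1) => j.succ.castSucc)).det := by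
  let φ := MvPolynomial.aeval (R := ℤ) (fun p : Fin (n + 3) × Fin (n + 3) => A p.1 p.2)
  have h := mul_left_cancel₀ (Matrix.det_mvPolynomialX_ne_zero (Fin (n + 3)) ℤ)
    (condensation_aux n (Matrix.mvPolynomialX (Fin (n + 3)) (Fin (n + 3)) ℤ))
  have h2 := congrArg φ h
  have hA : (Matrix.mvPolynomialX (Fin (n + 3)) (Fin (n + 3)) ℤ).map φ = A := by
    ext i j
    simp [φ]
  simp only [map_sub, map_mul, AlgHom.map_det, AlgHom.mapMatrix_apply, ← Matrix.submatrix_map, hA]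
    at h2
  exact h2
end

section
/- Let A be an n×n matrix (n ≥ 3) with entries a_{ij} over a field. Let b_{11}, b_{12}, b_{21}, b_{22} be the determinants of the four (n−1)×(n−1) corner submatrices of A (obtained by deleting the last row and last column, the last row and first column, the first row and last column, and the first row and first column, respectively), and let B = b_{11}b_{22} − b_{12}b_{21}. Let C be the determinant of the central (n−2)×(n−2) submatrix of A obtained by deleting both the first and last rows and both the first and last columns. If C ≠ 0, then det A = B / C. -/
open Matrix in
lemma bordered_det {K : Type*} [Field K] (n k : ℕ)
    (A : Matrix (Fin (n + 3)) (Fin (n + 3)) K)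
    (m : Fin (n + 1) → Fin (n + 3)) (r c : Fin k → Fin (n + 3))
    (h : (A.submatrix m m).det ≠ 0) :
    (A.submatrix (Sum.elim r m) (Sum.elim c m)).det = (A.submatrix m m).det *
      (Matrix.of fun i j => (A - A.submatrix id m * (A.submatrix m m)⁻¹ * A.submatrix m id)
        (r i) (c j)).det := by
  have hu : IsUnit (A.submatrix m m).det := isUnit_iff_ne_zero.mpr h
  letI := Matrix.invertibleOfIsUnitDet _ hu
  have e : A.submatrix (Sum.elim r m) (Sum.elim c m) =
      fromBlocks (A.submatrix r c) (A.submatrix r m) (A.submatrix m c) (A.submatrix m m) := by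
    ext i j
    rcases i with i | i <;> rcases j with j | j <;> rfl
  rw [e, det_fromBlocks₂₂, invOf_eq_nonsing_inv]
  rfl

lemma sign_pair {K : Type*} [Field K] {ι κ : Type*} [Fintype ι] [DecidableEq ι]
    [Fintype κ] [DecidableEq κ] (f g : ι ≃ κ) (X Y : Matrix κ κ K) :
    (X.submatrix f g).det * (Y.submatrix g f).det = X.det * Y.det := by
  have h1 : X.submatrix f g = (X.submatrix f f).submatrix id (g.trans f.symm) := by
    ext i j; simp
  have h2 : Y.submatrix g f = (Y.submatrix f f).submatrix (g.trans f.symm) id := by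
    ext i j; simp
  rw [h1, h2, Matrix.det_permute', Matrix.det_permute, Matrix.det_submatrix_equiv_self,
    Matrix.det_submatrix_equiv_self]
  rcases Int.units_eq_one_or (Equiv.Perm.sign (g.trans f.symm)) with h | h <;> simp [h]


/-- Reduction step over a field: for an `(n+3) × (n+3)` matrix `A` over a field whose
central minor `C` (of order `n+1`) is nonzero, `det A = B / C` where `B` is the 2×2
determinant of the four corner minors of order `n+2`. -/
theorem stmt_3 {K : Type*} [Field K] (n : ℕ)
    (A : Matrix (Fin (n + 3)) (Fin (n + 3)) K)
    (B C : K)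
    (hB : B = (A.submatrix Fin.castSucc Fin.castSucc).det * (A.submatrix Fin.succ Fin.succ).det
      - (A.submatrix Fin.castSucc Fin.succ).det * (A.submatrix Fin.succ Fin.castSucc).det)
    (hC : C = (A.submatrix (fun i : Fin (n + 1) => i.succ.castSucc)
        (fun j : Fin (n + 1) => j.succ.castSucc)).det)
    (hC0 : C ≠ 0) :
    A.det = B / C := by
  subst hB hC
  rw [eq_div_iff hC0]
  set m : Fin (n + 1) → Fin (n + 3) := fun i => i.succ.castSucc with hm
  have b0 : Function.Bijective (Sum.elim (fun _ : Fin 1 => (0 : Fin (n + 2))) (Fin.succ)) := by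
    rw [Fintype.bijective_iff_injective_and_card]
    refine ⟨?_, by simp; omega⟩
    rintro (i | i) (j | j) h
    · rw [Subsingleton.elim i j]
    · exact absurd h (Fin.succ_ne_zero j).symm
    · exact absurd h (Fin.succ_ne_zero i)
    · exact congrArg Sum.inr (Fin.succ_injective _ h)
  have b1 : Function.Bijective
      (Sum.elim (fun _ : Fin 1 => Fin.last (n + 1)) (Fin.castSucc)) := by
    rw [Fintype.bijective_iff_injective_and_card]
    refine ⟨?_, by simp; omega⟩
    rintro (i | i) (j | j) h <;> simp [Fin.ext_iff] at h ⊢ <;> omega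
  have b2 : Function.Bijective (Sum.elim (![0, Fin.last (n + 2)]) m) := by
    rw [Fintype.bijective_iff_injective_and_card]
    refine ⟨?_, by simp; omega⟩
    have m0 : ∀ i, m i ≠ 0 := fun i h => by
      have := congrArg Fin.val h
      simp only [hm, Fin.val_castSucc, Fin.val_succ, Fin.val_zero] at this
      omega
    have ml : ∀ i, m i ≠ Fin.last (n + 2) := fun i h => by
      have := congrArg Fin.val h
      simp only [hm, Fin.val_castSucc, Fin.val_succ, Fin.val_last] at this
      omega
    have hl : Fin.last (n + 2) ≠ 0 := fun h => by
      have := congrArg Fin.val h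
      simp only [Fin.val_last, Fin.val_zero] at this
      omega
    rintro (i | i) (j | j) h
    · fin_cases i <;> fin_cases j
      · rfl
      · exact absurd h hl.symm
      · exact absurd h hl
      · rfl
    · fin_cases i
      · exact absurd h (m0 j).symm
      · exact absurd h (ml j).symm
    · fin_cases j
      · exact absurd h (m0 i)
      · exact absurd h (ml i)
    · exact congrArg Sum.inr (Fin.succ_injective _ (Fin.castSucc_injective _ h))
  let f0 := Equiv.ofBijective _ b0
  let f1 := Equiv.ofBijective _ b1
  let f2 := Equiv.ofBijective _ b2
  have e0 : Fin.castSucc ∘ f0 = Sum.elim (fun _ : Fin 1 => (0 : Fin (n + 3))) m := by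
    funext i; rcases i with i | i <;> rfl
  have e1 : Fin.succ ∘ f1 = Sum.elim (fun _ : Fin 1 => Fin.last (n + 2)) m := by
    funext i; rcases i with i | i <;> rfl
  rw [← sign_pair f0 f1 (A.submatrix Fin.castSucc Fin.succ),
    ← Matrix.det_submatrix_equiv_self f0 (A.submatrix Fin.castSucc Fin.castSucc),
    ← Matrix.det_submatrix_equiv_self f1 (A.submatrix Fin.succ Fin.succ),
    ← Matrix.det_submatrix_equiv_self f2 A]
  simp only [Matrix.submatrix_submatrix, e0, e1]
  rw [show (f2 : Fin 2 ⊕ Fin (n + 1) → Fin (n + 3)) = Sum.elim (![0, Fin.last (n + 2)]) m from rfl]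
  simp only [bordered_det n _ A m _ _ hC0]
  simp only [Matrix.det_fin_two, Matrix.det_fin_one, Matrix.of_apply, Matrix.cons_val_zero,
    Matrix.cons_val_one]
  ring
end

section
/- (Chiò pivotal condensation with pivot in the last position.) Let A be an n×n matrix (n ≥ 2) with entries a_{ij} over a commutative ring. Define the (n−1)×(n−1) matrix B with entries b_{ij} = a_{ij}·a_{nn} − a_{in}·a_{nj} for 1 ≤ i,j ≤ n−1. Then det B = (a_{nn})^{n−2} · det A. -/
open Matrix in
theorem chio_aux {S : Type*} [CommRing S] {m : ℕ} (M : Matrix (Fin m) (Fin m) S)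
    (c : Matrix (Fin m) (Fin 1) S) (r : Matrix (Fin 1) (Fin m) S) (p : S) :
    p * (p • M - c * r).det = p ^ m * (fromBlocks M c r (p • (1 : Matrix (Fin 1) (Fin 1) S))).det := by
  have h : fromBlocks (p • (1 : Matrix (Fin m) (Fin m) S)) (-c) 0 (1 : Matrix (Fin 1) (Fin 1) S)
      * fromBlocks M c r (p • (1 : Matrix (Fin 1) (Fin 1) S))
      = fromBlocks (p • M - c * r) 0 r (p • (1 : Matrix (Fin 1) (Fin 1) S)) := by
    rw [fromBlocks_multiply]
    congr 1 <;> simp [sub_eq_add_neg]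
  have h2 := congrArg Matrix.det h
  rw [det_mul, det_fromBlocks_zero₂₁, det_fromBlocks_zero₁₂] at h2
  simp only [det_smul, det_one, Fintype.card_fin, mul_one, pow_one] at h2
  rw [h2, mul_comm]

open Matrix Polynomial in
theorem chio_aux2 {S : Type*} [CommRing S] {m : ℕ} (M : Matrix (Fin (m + 1)) (Fin (m + 1)) S)
    (c : Matrix (Fin (m + 1)) (Fin 1) S) (r : Matrix (Fin 1) (Fin (m + 1)) S) (p : S) :
    (p • M - c * r).det = p ^ m * (fromBlocks M c r (p • (1 : Matrix (Fin 1) (Fin 1) S))).det := by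
  have h := chio_aux (M.map (C : S →+* S[X])) (c.map (C : S →+* S[X])) (r.map (C : S →+* S[X]))
    (X + C p)
  rw [pow_succ', mul_assoc] at h
  have h2 := (monic_X_add_C p).isRegular.left h
  have h3 := congrArg (evalRingHom (0 : S)) h2
  rw [map_mul, map_pow, RingHom.map_det, RingHom.map_det] at h3
  convert h3 using 2
  · ext i j
    simp [Matrix.mul_apply]
  · simp
  · congr 1
    ext i j
    rcases i with i | i <;> rcases j with j | j <;> simp [Fin.fin_one_eq_zero]

/-- Chiò pivotal condensation with pivot in the last position: for an
`(n+2) × (n+2)` matrix `A` over a commutative ring, the `(n+1) × (n+1)` matrix `B`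
with entries `bᵢⱼ = aᵢⱼ aₙₙ − aᵢₙ aₙⱼ` satisfies `det B = aₙₙ ^ n · det A`. -/
theorem stmt_4 {R : Type*} [CommRing R] (n : ℕ)
    (A : Matrix (Fin (n + 2)) (Fin (n + 2)) R)
    (B : Matrix (Fin (n + 1)) (Fin (n + 1)) R)
    (hB : ∀ i j, B i j =
      A i.castSucc j.castSucc * A (Fin.last (n + 1)) (Fin.last (n + 1))
        - A i.castSucc (Fin.last (n + 1)) * A (Fin.last (n + 1)) j.castSucc) :
    B.det = A (Fin.last (n + 1)) (Fin.last (n + 1)) ^ n * A.det := by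
  have key := chio_aux2 (Matrix.of fun i j : Fin (n + 1) => A i.castSucc j.castSucc)
    (Matrix.of fun i _ => A i.castSucc (Fin.last (n + 1)))
    (Matrix.of fun _ j => A (Fin.last (n + 1)) j.castSucc)
    (A (Fin.last (n + 1)) (Fin.last (n + 1)))
  rw [← Matrix.det_submatrix_equiv_self (finSumFinEquiv : Fin (n + 1) ⊕ Fin 1 ≃ Fin (n + 2)) A]
  convert key using 2
  · ext i j
    simp [Matrix.mul_apply, hB, mul_comm]
  · congr 1
    ext i j
    have hl : ∀ k : Fin 1, Fin.natAdd (n + 1) k = Fin.last (n + 1) := by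
      intro k
      ext
      simp
    have hc : ∀ k : Fin (n + 1), Fin.castAdd 1 k = k.castSucc := fun _ => rfl
    rcases i with i | i <;> rcases j with j | j <;>
      simp [hl, hc, Fin.fin_one_eq_zero]
end

section
/- (Chiò pivotal condensation, general pivot.) Let A be an n×n matrix (n ≥ 2) with entries a_{ij} over a commutative ring, and fix indices r, s with 1 ≤ r, s ≤ n. For every pair of indices i ≠ r and j ≠ s, define b_{ij} = σ_{ij}·(a_{ij}a_{rs} − a_{is}a_{rj}), where σ_{ij} = +1 if (r − i) and (s − j) have the same sign and σ_{ij} = −1 otherwise. Let B be the (n−1)×(n−1) matrix whose rows are indexed by the indices i ≠ r (in increasing order), columns by the indices j ≠ s (in increasing order), with entries b_{ij}. Then det B = (a_{rs})^{n−2} · det A. -/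
theorem chio_aux1 {R : Type*} [CommRing R] (n : ℕ)
    (A : Matrix (Fin (n + 2)) (Fin (n + 2)) R) (r s : Fin (n + 2)) :
    A r s * ((-1) ^ (r + s : ℕ) * (Matrix.of fun i j : Fin (n + 1) =>
      A (r.succAbove i) (s.succAbove j) * A r s
            - A (r.succAbove i) s * A r (s.succAbove j)).det)
      = A r s * (A r s ^ n * A.det) := by
  let v : Fin (n + 2) → R := fun i => if i = r then 1 else A r s
  let c : Fin (n + 2) → R := fun i => if i = r then 0 else - A i s
  let E : Matrix (Fin (n + 2)) (Fin (n + 2)) R := Matrix.of fun i j => v i * A i j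
  let D : Matrix (Fin (n + 2)) (Fin (n + 2)) R := Matrix.of fun i j => E i j + c i * E r j
  have h1 : E.det = (∏ i, v i) * A.det := Matrix.det_mul_column v A
  have h2 : D.det = E.det :=
    Matrix.det_eq_of_forall_row_eq_smul_add_const c r (by simp [c]) (fun i j => rfl)
  have hv : ∏ i, v i = A r s ^ (n + 1) := by
    rw [Fin.prod_univ_succAbove _ r]
    simp [v, Fin.succAbove_ne]
  have h3 : D.det = (-1) ^ (r + s : ℕ) * A r s * (Matrix.of fun i j : Fin (n + 1) =>
      A (r.succAbove i) (s.succAbove j) * A r s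
            - A (r.succAbove i) s * A r (s.succAbove j)).det := by
    rw [Matrix.det_succ_column D s, Fin.sum_univ_succAbove _ r, Finset.sum_eq_zero, add_zero]
    · congr 1
      · simp [D, E, c, v]
      · congr 1
        ext i j
        simp [D, E, c, v, Fin.succAbove_ne]
        ring
    · intro i _
      have : D (r.succAbove i) s = 0 := by
        simp [D, E, c, v, Fin.succAbove_ne]
        ring
      rw [this]; simp
  rw [h2, h1, hv] at h3
  rw [← mul_assoc (A r s) (A r s ^ n), ← pow_succ', h3]
  ring

theorem chio_aux2_s5 {R : Type*} [CommRing R] (n : ℕ)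
    (A : Matrix (Fin (n + 2)) (Fin (n + 2)) R) (r s : Fin (n + 2)) :
    (-1) ^ (r + s : ℕ) * (Matrix.of fun i j : Fin (n + 1) =>
      A (r.succAbove i) (s.succAbove j) * A r s
            - A (r.succAbove i) s * A r (s.succAbove j)).det
      = A r s ^ n * A.det := by
  let P : Matrix (Fin (n + 2)) (Fin (n + 2)) (Polynomial R) :=
    Matrix.of fun i j => if i = r ∧ j = s then Polynomial.X else Polynomial.C (A i j)
  have hP : P r s = Polynomial.X := by simp [P]
  have h := chio_aux1 n P r s
  have hreg : IsRegular (P r s) := by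
    rw [hP]
    exact Polynomial.isRegular_X
  have hcan := hreg.left h
  have hev := congrArg (Polynomial.evalRingHom (A r s)) hcan
  have hA : ∀ i j, (Polynomial.evalRingHom (A r s)) (P i j) = A i j := by
    intro i j
    by_cases hij : i = r ∧ j = s
    · obtain ⟨rfl, rfl⟩ := hij
      simp [P]
    · simp [P, hij]
  rw [map_mul, map_mul, map_pow, map_pow, map_neg, map_one, RingHom.map_det, RingHom.map_det,
    hA] at hev
  convert hev using 3
  · ext i j
    simp only [Matrix.of_apply, RingHom.mapMatrix_apply, Matrix.map_apply, map_sub, map_mul, hA]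
  · ext i j
    simp only [RingHom.mapMatrix_apply, Matrix.map_apply, hA]

theorem chio_sign {R : Type*} [CommRing R] (n : ℕ) (r : Fin (n + 1)) :
    (∏ i : Fin n, (if r.succAbove i < r then (1 : R) else -1)) = (-1) ^ (n - r : ℕ) := by
  have h : (∏ i : Fin (n + 1), (if i ≤ r then (1 : R) else -1)) = (-1) ^ (n - r : ℕ) := by
    rw [Finset.prod_ite, Finset.prod_const_one, one_mul, Finset.prod_const]
    congr 1
    have : (Finset.univ.filter fun i : Fin (n + 1) => ¬ i ≤ r) = Finset.Ioi r := by
      ext i; simp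
    rw [this, Fin.card_Ioi]
    omega
  rw [← h, Fin.prod_univ_succAbove _ r]
  simp only [le_refl, if_true, one_mul]
  refine Finset.prod_congr rfl fun i _ => ?_
  have := Fin.succAbove_ne r i
  simp [lt_iff_le_and_ne, this]

/-- Chiò pivotal condensation with a general pivot `(r, s)`: for an `(n+2) × (n+2)`
matrix `A` over a commutative ring, the `(n+1) × (n+1)` matrix `B` indexed by the rows
`≠ r` and columns `≠ s` (in increasing order, via `Fin.succAbove`), with entries
`σᵢⱼ (aᵢⱼ a_{rs} − a_{is} a_{rj})` where `σᵢⱼ` is the sign of `(r − i)(s − j)`,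
satisfies `det B = a_{rs} ^ n · det A`. -/
theorem stmt_5 {R : Type*} [CommRing R] (n : ℕ)
    (A : Matrix (Fin (n + 2)) (Fin (n + 2)) R)
    (r s : Fin (n + 2))
    (B : Matrix (Fin (n + 1)) (Fin (n + 1)) R)
    (hB : ∀ i j, B i j =
      (if (0 : ℤ) < (((r : ℕ) : ℤ) - ((r.succAbove i : ℕ) : ℤ))
            * (((s : ℕ) : ℤ) - ((s.succAbove j : ℕ) : ℤ)) then (1 : R) else -1)
        * (A (r.succAbove i) (s.succAbove j) * A r s
            - A (r.succAbove i) s * A r (s.succAbove j))) :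
    B.det = A r s ^ n * A.det := by

  let u : Fin (n + 1) → R := fun i => if r.succAbove i < r then 1 else -1
  let w : Fin (n + 1) → R := fun j => if s.succAbove j < s then 1 else -1
  let C : Matrix (Fin (n + 1)) (Fin (n + 1)) R := Matrix.of fun i j =>
      A (r.succAbove i) (s.succAbove j) * A r s
            - A (r.succAbove i) s * A r (s.succAbove j)
  have hBC : B = Matrix.of fun i j => u i * (Matrix.of fun i j => w j * C i j) i j := by
    ext i j
    rw [hB]
    simp only [Matrix.of_apply, C, u, w]
    rw [← mul_assoc]
    congr 1
    have h1 := Fin.val_ne_of_ne (Fin.succAbove_ne r i)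
    have h2 := Fin.val_ne_of_ne (Fin.succAbove_ne s j)
    simp only [Fin.lt_def]
    generalize (r.succAbove i : ℕ) = a at *
    generalize (s.succAbove j : ℕ) = b at *
    rcases lt_or_gt_of_ne h1 with h1 | h1 <;> rcases lt_or_gt_of_ne h2 with h2 | h2
    · rw [if_pos (mul_pos (by omega) (by omega)), if_pos h1, if_pos h2, one_mul]
    · rw [if_neg (not_lt.2 (mul_nonpos_of_nonneg_of_nonpos (by omega) (by omega))), if_pos h1,
        if_neg (by omega), one_mul]
    · rw [if_neg (not_lt.2 (mul_nonpos_of_nonpos_of_nonneg (by omega) (by omega))),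
        if_neg (by omega), if_pos h2, mul_one]
    · rw [if_pos (mul_pos_of_neg_of_neg (by omega) (by omega)), if_neg (by omega),
        if_neg (by omega)]
      ring
  rw [hBC, Matrix.det_mul_column, Matrix.det_mul_row, chio_sign, chio_sign, ← chio_aux2_s5,
    ← mul_assoc, ← pow_add]
  congr 1
  rw [neg_one_pow_eq_pow_mod_two, neg_one_pow_eq_pow_mod_two (n := (r + s : ℕ))]
  congr 1
  omega
end

section
/- Let A be an n×n matrix (n ≥ 2) with entries a_{ij} over a field, and fix indices r, s with 1 ≤ r, s ≤ n such that a_{rs} ≠ 0. For every pair of indices i ≠ r and j ≠ s, define b_{ij} = σ_{ij}·(a_{ij}a_{rs} − a_{is}a_{rj}), where σ_{ij} = +1 if (r − i) and (s − j) have the same sign and σ_{ij} = −1 otherwise, and let B be the determinant of the (n−1)×(n−1) matrix with entries b_{ij} (rows indexed by i ≠ r and columns by j ≠ s, in increasing order). Then det A = B / (a_{rs})^{n−2}. -/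
theorem aux_sign {K : Type*} [Field K] (m : ℕ) (r : Fin (m + 1)) :
    ∏ i : Fin m, (if i.castSucc < r then (-1 : K) else 1) = (-1) ^ (r : ℕ) := by
  have h : ∀ i : Fin m, (if i.castSucc < r then (-1 : K) else 1)
      = (fun k : ℕ => if k < (r : ℕ) then (-1 : K) else 1) (i : ℕ) := by
    intro i
    simp [Fin.lt_def]
  rw [Finset.prod_congr rfl (fun i _ => h i),
    Fin.prod_univ_eq_prod_range (fun k : ℕ => if k < (r : ℕ) then (-1 : K) else 1) m,
    Finset.prod_ite]
  have hf : (Finset.range m).filter (fun k => k < (r : ℕ)) = Finset.range (r : ℕ) := by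
    ext k
    have := r.isLt
    simp only [Finset.mem_filter, Finset.mem_range]
    omega
  simp [hf]

theorem aux_split {K : Type*} [Field K] (m : ℕ) (r s : Fin (m + 1)) (i j : Fin m) :
    (if (0 : ℤ) < (((r : ℕ) : ℤ) - ((r.succAbove i : ℕ) : ℤ))
            * (((s : ℕ) : ℤ) - ((s.succAbove j : ℕ) : ℤ)) then (1 : K) else -1)
      = (if i.castSucc < r then (-1 : K) else 1) * (if j.castSucc < s then (-1 : K) else 1) := by
  by_cases h1 : i.castSucc < r <;> by_cases h2 : j.castSucc < s <;>
    simp only [h1, h2, Fin.succAbove, if_true, if_false] <;>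
    simp only [Fin.lt_def, Fin.val_castSucc, Fin.val_succ] at h1 h2 ⊢
  · rw [if_pos]
    · ring
    · apply mul_pos <;> omega
  · rw [if_neg]
    · ring
    · apply not_lt.mpr
      apply mul_nonpos_of_nonneg_of_nonpos <;> push_cast <;> omega
  · rw [if_neg]
    · ring
    · apply not_lt.mpr
      apply mul_nonpos_of_nonpos_of_nonneg <;> push_cast <;> omega
  · rw [if_pos]
    · ring
    · apply mul_pos_of_neg_of_neg <;> push_cast <;> omega

/-- Chiò pivotal condensation over a field, solved for `det A`: for an `(n+2) × (n+2)`
matrix `A` over a field with pivot `a_{rs} ≠ 0`, `det A = B / a_{rs} ^ n`, where `B` is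
the determinant of the `(n+1) × (n+1)` matrix indexed by rows `≠ r` and columns `≠ s`
(in increasing order, via `Fin.succAbove`), with entries
`σᵢⱼ (aᵢⱼ a_{rs} − a_{is} a_{rj})`, `σᵢⱼ` being the sign of `(r − i)(s − j)`. -/
theorem stmt_6 {K : Type*} [Field K] (n : ℕ)
    (A : Matrix (Fin (n + 2)) (Fin (n + 2)) K)
    (r s : Fin (n + 2)) (hrs : A r s ≠ 0)
    (B : K)
    (hB : B = (Matrix.det (fun i j : Fin (n + 1) =>
      (if (0 : ℤ) < (((r : ℕ) : ℤ) - ((r.succAbove i : ℕ) : ℤ))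
            * (((s : ℕ) : ℤ) - ((s.succAbove j : ℕ) : ℤ)) then (1 : K) else -1)
        * (A (r.succAbove i) (s.succAbove j) * A r s
            - A (r.succAbove i) s * A r (s.succAbove j))))) :
    A.det = B / A r s ^ n := by
  have hdet : A.det = (-1) ^ ((r : ℕ) + (s : ℕ)) * A r s *
      Matrix.det (Matrix.of fun i j : Fin (n + 1) => A (r.succAbove i) (s.succAbove j)
        - A (r.succAbove i) s / A r s * A r (s.succAbove j)) := by
    let M : Matrix (Fin (n + 2)) (Fin (n + 2)) K := Matrix.of fun i j =>
      if i = r then A r j else A i j - A i s / A r s * A r j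
    have h1 : A.det = M.det := by
      apply Matrix.det_eq_of_forall_row_eq_smul_add_const
        (fun i => if i = r then 0 else A i s / A r s) r (by simp)
      intro i j
      by_cases h : i = r <;> simp [M, h]
    rw [h1, Matrix.det_succ_column M s, Finset.sum_eq_single r]
    · congr 1
      · simp [M]
      · congr 1
        ext i j
        simp [M, Fin.succAbove_ne]
    · intro i _ hi
      simp [M, hi, hrs]
    · simp
  have hB2 : B = (-1) ^ (r : ℕ) * ((-1) ^ (s : ℕ) * (A r s ^ (n + 1) *
      Matrix.det (Matrix.of fun i j : Fin (n + 1) => A (r.succAbove i) (s.succAbove j)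
        - A (r.succAbove i) s / A r s * A r (s.succAbove j)))) := by
    rw [hB, ← aux_sign (n + 1) r, ← aux_sign (n + 1) s]
    have hc : A r s ^ (n + 1) = ∏ _i : Fin (n + 1), A r s := by simp
    rw [hc, ← Matrix.det_mul_column, ← Matrix.det_mul_row, ← Matrix.det_mul_column]
    congr 1
    ext i j
    rw [aux_split]
    simp only [Matrix.of_apply]
    field_simp
  rw [hdet, hB2, pow_add, eq_div_iff (pow_ne_zero _ hrs)]
  ring
end
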